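/- Let n ≥ 1 and let D = {(y,ν,ω) ∈ ℝⁿ × ℝⁿ × ℝⁿ : |ω| = 1 and ν·ω ≠ 0}. For (y,ν,ω) ∈ D set σ = |ν|²/(2ν·ω) and define Ψ(y,ν,ω) = (−y·((ν − σω)/σ + ω), −(ν − σω)/σ, ω, σ, σ·(y − (y·ω)ω)) ∈ ℝ × ℝⁿ × ℝⁿ × ℝ × ℝⁿ. Then Ψ is injective on D: if Ψ(y,ν,ω) = Ψ(ȳ,ν̄,ω̄), then y = ȳ, ν = ν̄, and ω = ω̄. -/

import Mathlib

open scoped RealInnerProductSpace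

/-!
Since `(ν - σω)/σ + ω = ν/σ`, the outgoing direction is `φ = ω - ν/σ` and the time is
`s = -(y·ν)/σ`. Hence `(φ, ω, σ)` gives `ν`, and `(s, σ)` gives `y·ν`. The last coordinate gives `y`
modulo the line `ℝω`, which is transverse to the hyperplanes `y·ν = const` because `ν·ω ≠ 0`.
-/

theorem eq_of_map_eq_of_sub_smul_eq_sub_smul {R M : Type*} [Ring R] [NoZeroDivisors R]
    [AddCommGroup M] [Module R M] {f : M →ₗ[R] R} {v x y : M} {a b : R}
    (hv : f v ≠ 0) (hf : f x = f y) (h : x - a • v = y - b • v) : x = y := by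
  have hfab : a * f v = b * f v := by simpa [hf] using congrArg f h
  obtain rfl : a = b := mul_right_cancel₀ hv hfab
  exact sub_left_injective h

section ReflectedLagrangian

variable {E : Type*} [SeminormedAddCommGroup E] [InnerProductSpace ℝ E]

/-- The frequency `σ = |ν|²/(2ν·ω)` of the reflection of the direction `ω` by a surface with
conormal `ν`. On tangential rays, `ν·ω = 0`, it has the junk value `0`. -/
noncomputable def reflectedFrequency (ν ω : E) : ℝ :=
  ‖ν‖ ^ 2 / (2 * ⟪ν, ω⟫)

/-- The parametrization `Ψ` of the reflected Lagrangian by triples `(y, ν, ω)`, with coordinates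
time, outgoing direction, incidence direction, frequency and spherical cotangent coordinate. It is
meaningful away from tangential rays, `ν·ω = 0`. -/
noncomputable def reflectedLagrangianParam : E × E × E → ℝ × E × E × ℝ × E
  | (y, ν, ω) =>
    let σ := reflectedFrequency ν ω
    (-⟪y, σ⁻¹ • (ν - σ • ω) + ω⟫, -(σ⁻¹ • (ν - σ • ω)), ω, σ, σ • (y - ⟪y, ω⟫ • ω))

theorem reflectedFrequency_ne_zero {ν ω : E} (h : ⟪ν, ω⟫ ≠ 0) : reflectedFrequency ν ω ≠ 0 := by
  have hν : ‖ν‖ ≠ 0 := mt (inner_eq_zero_of_left ω) h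
  exact div_ne_zero (pow_ne_zero 2 hν) (mul_ne_zero two_ne_zero h)

theorem reflectedLagrangianParam_eq (y : E) {ν ω : E} (h : ⟪ν, ω⟫ ≠ 0) :
    reflectedLagrangianParam (y, ν, ω) =
      (-((reflectedFrequency ν ω)⁻¹ * ⟪y, ν⟫), ω - (reflectedFrequency ν ω)⁻¹ • ν, ω,
        reflectedFrequency ν ω, reflectedFrequency ν ω • (y - ⟪y, ω⟫ • ω)) := by
  simp only [reflectedLagrangianParam, smul_sub, inv_smul_smul₀ (reflectedFrequency_ne_zero h),
    sub_add_cancel, neg_sub, real_inner_smul_right]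

theorem stmt5_general :
    Set.InjOn reflectedLagrangianParam {p : E × E × E | ⟪p.2.1, p.2.2⟫ ≠ 0} := by
  rintro ⟨y, ν, ω⟩ (h : ⟪ν, ω⟫ ≠ 0) ⟨y', ν', ω'⟩ (h' : ⟪ν', ω'⟫ ≠ 0) hΨ
  have hσ : reflectedFrequency ν ω ≠ 0 := reflectedFrequency_ne_zero h
  rw [reflectedLagrangianParam_eq y h, reflectedLagrangianParam_eq y' h'] at hΨ
  simp only [Prod.mk.injEq] at hΨ
  obtain ⟨htime, hdir, rfl, hfreq, hcot⟩ := hΨ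
  rw [← hfreq] at htime hdir hcot
  obtain rfl : ν = ν' := smul_right_injective E (inv_ne_zero hσ) (sub_right_injective hdir)
  have hyν : ⟪y, ν⟫ = ⟪y', ν⟫ := mul_left_cancel₀ (inv_ne_zero hσ) (neg_injective htime)
  have hmod : y - ⟪y, ω⟫ • ω = y' - ⟪y', ω⟫ • ω := smul_right_injective E hσ hcot
  obtain rfl : y = y' := eq_of_map_eq_of_sub_smul_eq_sub_smul (f := innerₗ E ν) h
    (by simpa only [innerₗ_apply_apply, real_inner_comm] using hyν) hmod
  rfl

end ReflectedLagrangian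

/-- The parametrization `Ψ` of the reflected Lagrangian is injective on the set
`D = {(y,ν,ω) : |ω| = 1, ν·ω ≠ 0}`. -/
theorem stmt5 (n : ℕ) (hn : 1 ≤ n)
    (y ν ω ybar νbar ωbar : EuclideanSpace ℝ (Fin n))
    (hω : ‖ω‖ = 1) (hνω : ⟪ν, ω⟫ ≠ 0)
    (hωbar : ‖ωbar‖ = 1) (hνωbar : ⟪νbar, ωbar⟫ ≠ 0)
    (σ σbar : ℝ)
    (hσ : σ = ‖ν‖ ^ 2 / (2 * ⟪ν, ω⟫))
    (hσbar : σbar = ‖νbar‖ ^ 2 / (2 * ⟪νbar, ωbar⟫))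
    (h1 : -⟪y, σ⁻¹ • (ν - σ • ω) + ω⟫ = -⟪ybar, σbar⁻¹ • (νbar - σbar • ωbar) + ωbar⟫)
    (h2 : -(σ⁻¹ • (ν - σ • ω)) = -(σbar⁻¹ • (νbar - σbar • ωbar)))
    (h3 : ω = ωbar)
    (h4 : σ = σbar)
    (h5 : σ • (y - ⟪y, ω⟫ • ω) = σbar • (ybar - ⟪ybar, ωbar⟫ • ωbar)) :
    y = ybar ∧ ν = νbar ∧ ω = ωbar := by
  subst hσ hσbar
  have hΨ : reflectedLagrangianParam (y, ν, ω) = reflectedLagrangianParam (ybar, νbar, ωbar) := by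
    simpa only [reflectedLagrangianParam, reflectedFrequency, Prod.mk.injEq] using
      ⟨h1, h2, h3, h4, h5⟩
  simpa only [Prod.mk.injEq] using stmt5_general hνω hνωbar hΨ
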